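/- The formal power series identity (1 + F(x))·I(x) = F(x) holds in ℚ[[x]]; equivalently, I(x) = F(x)/(1+F(x)). -/

import Mathlib

def PlusIndec {n : ℕ} (π : Equiv.Perm (Fin n)) : Prop :=
  ¬ ∃ k : ℕ, 1 ≤ k ∧ k < n ∧
    (Finset.univ.filter fun i : Fin n => (i : ℕ) < k).image π =
      Finset.univ.filter fun i : Fin n => (i : ℕ) < k

noncomputable def plusIndecCount (n : ℕ) : ℕ :=
  Nat.card {π : Equiv.Perm (Fin n) // PlusIndec π}

noncomputable def Fps : PowerSeries ℚ :=
  PowerSeries.mk fun k => if k = 0 then 0 else (Nat.factorial k : ℚ)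

noncomputable def Ips : PowerSeries ℚ :=
  PowerSeries.mk fun k => if k = 0 then 0 else (plusIndecCount k : ℚ)

/-!
Split a nonempty permutation `π` at the least `k ≥ 1` such that `π` maps `{1, …, k}` to itself.
The part before the split is an arbitrary plus indecomposable permutation of length `k`, the part
after it is an arbitrary permutation of length `n - k`, so `n! = ∑ k ∈ {1, …, n}, i_k · (n - k)!`.
With the common factor `x` of `F` and `I` cancelled, this recurrence is the coefficientwise form of
the identity.
-/

open Equiv (Perm)
open Finset (univ)
open Finset.HasAntidiagonal
open scoped Finset Nat

theorem image_perm_eq_self_iff {α : Type*} [DecidableEq α] {s : Finset α} {π : Perm α} :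
    s.image π = s ↔ ∀ i ∈ s, π i ∈ s := by
  rw [← Finset.image_subset_iff]
  exact ⟨fun h => h.subset, fun h =>
    Finset.eq_of_subset_of_card_le h (Finset.card_image_of_injective s π.injective).ge⟩

section Prefix

variable {n k : ℕ} {π : Perm (Fin n)}

/-- The first `k` elements of `Fin n` are mapped among themselves by `π`. All of `Fin n` counts as
its prefix of length `k` when `n ≤ k`. -/
def PreservesPrefix (π : Perm (Fin n)) (k : ℕ) : Prop :=
  ∀ i : Fin n, (i : ℕ) < k → (π i : ℕ) < k

theorem preservesPrefix_self (π : Perm (Fin n)) : PreservesPrefix π n :=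
  fun i _ => (π i).isLt

theorem plusIndec_iff_forall_not_preservesPrefix :
    PlusIndec π ↔ ∀ k, 0 < k → k < n → ¬ PreservesPrefix π k := by
  simp only [PlusIndec, image_perm_eq_self_iff, Finset.mem_filter_univ, PreservesPrefix,
    Nat.one_le_iff_ne_zero, Nat.pos_iff_ne_zero, not_exists, not_and]

/-- The length of the first block of `π`: the least positive length of a prefix preserved by `π`.
For the empty permutation this is `1`, not `0`. -/
noncomputable def firstBlockSize (π : Perm (Fin n)) : ℕ :=
  sInf {k | 0 < k ∧ PreservesPrefix π k}

theorem firstBlockSize_le (hk : 0 < k) (h : PreservesPrefix π k) : firstBlockSize π ≤ k :=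
  Nat.sInf_le ⟨hk, h⟩

theorem firstBlockSize_le_length (hn : 0 < n) (π : Perm (Fin n)) : firstBlockSize π ≤ n :=
  firstBlockSize_le hn (preservesPrefix_self π)

theorem firstBlockSize_mem (π : Perm (Fin n)) :
    0 < firstBlockSize π ∧ PreservesPrefix π (firstBlockSize π) :=
  Nat.sInf_mem (s := {k | 0 < k ∧ PreservesPrefix π k})
    ⟨n + 1, n.succ_pos, fun i _ => (π i).isLt.trans n.lt_succ_self⟩

theorem firstBlockSize_pos (π : Perm (Fin n)) : 0 < firstBlockSize π :=
  (firstBlockSize_mem π).1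

theorem preservesPrefix_firstBlockSize (π : Perm (Fin n)) :
    PreservesPrefix π (firstBlockSize π) :=
  (firstBlockSize_mem π).2

theorem plusIndec_iff_firstBlockSize_eq (hn : 0 < n) : PlusIndec π ↔ firstBlockSize π = n := by
  rw [plusIndec_iff_forall_not_preservesPrefix]
  constructor
  · intro h
    by_contra hne
    exact h _ (firstBlockSize_pos π) ((firstBlockSize_le_length hn π).lt_of_ne hne)
      (preservesPrefix_firstBlockSize π)
  · intro h k hk hkn hπ
    exact (firstBlockSize_le hk hπ).not_gt (hkn.trans_eq h.symm)

end Prefix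

section DirectSum

variable {k l m : ℕ}

/-- The direct sum of `σ` and `τ`: it acts as `σ` on the first `k` elements of `Fin (k + l)` and as
`τ`, shifted by `k`, on the last `l`. -/
def permDirectSum (σ : Perm (Fin k)) (τ : Perm (Fin l)) : Perm (Fin (k + l)) :=
  finSumFinEquiv.permCongr (Perm.sumCongr σ τ)

theorem permDirectSum_castAdd (σ : Perm (Fin k)) (τ : Perm (Fin l)) (i : Fin k) :
    permDirectSum σ τ (Fin.castAdd l i) = Fin.castAdd l (σ i) := by
  simp [permDirectSum, Equiv.permCongr_apply]

theorem permDirectSum_injective2 :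
    Function.Injective2 (permDirectSum : Perm (Fin k) → Perm (Fin l) → Perm (Fin (k + l))) :=
  fun σ₁ σ₂ τ₁ τ₂ h =>
    Prod.mk.inj <| Perm.sumCongrHom_injective (a₁ := (σ₁, τ₁)) (a₂ := (σ₂, τ₂)) <|
      finSumFinEquiv.permCongr.injective h

theorem preservesPrefix_permDirectSum_iff (hm : m ≤ k) (σ : Perm (Fin k)) (τ : Perm (Fin l)) :
    PreservesPrefix (permDirectSum σ τ) m ↔ PreservesPrefix σ m := by
  constructor
  · intro h i hi
    simpa [permDirectSum_castAdd] using h (Fin.castAdd l i) hi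
  · intro h i hi
    obtain ⟨j, rfl⟩ : ∃ j : Fin k, Fin.castAdd l j = i := ⟨⟨i, hi.trans_le hm⟩, rfl⟩
    simpa [permDirectSum_castAdd] using h j hi

theorem PreservesPrefix.exists_permDirectSum_eq {π : Perm (Fin (k + l))}
    (h : PreservesPrefix π k) : ∃ σ τ, permDirectSum σ τ = π := by
  have mapsTo_inl : Set.MapsTo (finSumFinEquiv.permCongr.symm π)
      (Set.range Sum.inl) (Set.range Sum.inl) := by
    rintro _ ⟨i, rfl⟩
    refine ⟨⟨π (Fin.castAdd l i), h _ i.isLt⟩, finSumFinEquiv.injective ?_⟩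
    ext
    simp
  obtain ⟨⟨σ, τ⟩, hστ⟩ := Perm.mem_sumCongrHom_range_of_perm_mapsTo_inl mapsTo_inl
  exact ⟨σ, τ, (Equiv.eq_symm_apply _).1 hστ⟩

theorem firstBlockSize_permDirectSum (hk : 0 < k) (σ : Perm (Fin k)) (τ : Perm (Fin l)) :
    firstBlockSize (permDirectSum σ τ) = firstBlockSize σ := by
  have preserves_iff {m : ℕ} (hm : m ≤ k) := preservesPrefix_permDirectSum_iff hm σ τ
  have sum_le : firstBlockSize (permDirectSum σ τ) ≤ firstBlockSize σ :=
    firstBlockSize_le (firstBlockSize_pos σ) <|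
      (preserves_iff (firstBlockSize_le_length hk σ)).2 (preservesPrefix_firstBlockSize σ)
  refine sum_le.antisymm (firstBlockSize_le (firstBlockSize_pos _) ?_)
  exact (preserves_iff (sum_le.trans (firstBlockSize_le_length hk σ))).1
    (preservesPrefix_firstBlockSize _)

theorem setOf_firstBlockSize_eq (hk : 0 < k) :
    {π : Perm (Fin (k + l)) | firstBlockSize π = k} =
      Function.uncurry permDirectSum '' ({σ | PlusIndec σ} ×ˢ Set.univ) := by
  ext π
  constructor
  · rintro (hπ : firstBlockSize π = k)
    have hpre : PreservesPrefix π k := by simpa [hπ] using preservesPrefix_firstBlockSize π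
    obtain ⟨σ, τ, rfl⟩ := hpre.exists_permDirectSum_eq
    rw [firstBlockSize_permDirectSum hk] at hπ
    exact ⟨(σ, τ), ⟨(plusIndec_iff_firstBlockSize_eq hk).2 hπ, trivial⟩, rfl⟩
  · rintro ⟨⟨σ, τ⟩, ⟨hσ, -⟩, rfl⟩
    exact (firstBlockSize_permDirectSum hk σ τ).trans ((plusIndec_iff_firstBlockSize_eq hk).1 hσ)

theorem ncard_setOf_firstBlockSize_eq {n : ℕ} (hk : 0 < k) (hn : k + l = n) :
    {π : Perm (Fin n) | firstBlockSize π = k}.ncard = plusIndecCount k * l ! := by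
  subst hn
  rw [setOf_firstBlockSize_eq hk, Set.ncard_image_of_injective _ permDirectSum_injective2.uncurry,
    Set.ncard_prod, Set.ncard_univ, Nat.card_perm, Nat.card_fin]
  rfl

end DirectSum

theorem factorial_succ_eq_sum_plusIndecCount (n : ℕ) :
    (n + 1)! = ∑ p ∈ antidiagonal n, p.1 ! * plusIndecCount (p.2 + 1) := by
  let splitIndex (π : Perm (Fin (n + 1))) : ℕ × ℕ :=
    (n + 1 - firstBlockSize π, firstBlockSize π - 1)
  have splitIndex_eq_iff {p : ℕ × ℕ} (hp : p.1 + p.2 = n) (π : Perm (Fin (n + 1))) :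
      splitIndex π = p ↔ firstBlockSize π = p.2 + 1 := by
    have := firstBlockSize_pos π
    simp only [splitIndex, Prod.ext_iff]
    omega
  have splitIndex_mem (π : Perm (Fin (n + 1))) : splitIndex π ∈ antidiagonal n := by
    have := firstBlockSize_pos π
    have := firstBlockSize_le_length n.succ_pos π
    simp only [splitIndex, mem_antidiagonal]
    omega
  have card_fiber (p : ℕ × ℕ) (hp : p ∈ antidiagonal n) :
      #{π | splitIndex π = p} = p.1 ! * plusIndecCount (p.2 + 1) := by
    rw [mem_antidiagonal] at hp
    simp only [splitIndex_eq_iff hp]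
    rw [← Set.ncard_coe_finset, Finset.coe_filter_univ,
      ncard_setOf_firstBlockSize_eq (l := p.1) p.2.succ_pos (by omega), mul_comm]
  calc (n + 1)! = #(univ : Finset (Perm (Fin (n + 1)))) := by
        rw [Finset.card_univ, Fintype.card_perm, Fintype.card_fin]
    _ = ∑ p ∈ antidiagonal n, #{π | splitIndex π = p} :=
        Finset.card_eq_sum_card_fiberwise fun π _ => splitIndex_mem π
    _ = ∑ p ∈ antidiagonal n, p.1 ! * plusIndecCount (p.2 + 1) :=
        Finset.sum_congr rfl card_fiber

open PowerSeries

theorem mk_factorial_mul_mk_plusIndecCount_succ {R : Type*} [Semiring R] :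
    (mk fun k => (k ! : R)) * mk (fun k => (plusIndecCount (k + 1) : R)) =
      mk fun k => ((k + 1)! : R) := by
  ext n
  simp [coeff_mul, factorial_succ_eq_sum_plusIndecCount n]

theorem one_add_Fps_eq_mk : 1 + Fps = mk fun k => (k ! : ℚ) := by
  ext k
  cases k <;> simp [Fps, coeff_one]

theorem Fps_eq_X_mul_mk : Fps = X * mk fun k => ((k + 1)! : ℚ) := by
  ext k
  cases k <;> simp [Fps, coeff_succ_X_mul]

theorem Ips_eq_X_mul_mk : Ips = X * mk fun k => (plusIndecCount (k + 1) : ℚ) := by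
  ext k
  cases k <;> simp [Ips, coeff_succ_X_mul]

/-- `(1 + F(x))·I(x) = F(x)` in `ℚ[[x]]`, i.e. `I(x) = F(x)/(1+F(x))`. -/
theorem one_add_F_mul_I_eq_F : (1 + Fps) * Ips = Fps := by
  rw [one_add_Fps_eq_mk, Ips_eq_X_mul_mk, Fps_eq_X_mul_mk, mul_left_comm,
    mk_factorial_mul_mk_plusIndecCount_succ]
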